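/- Let M ≥ 1 be an integer, η ∈ (0,1), and let r, D be integers with 1 ≤ r ≤ M, D ≥ M+1, and (D+1)·η ≥ M. Define the degree distribution Ψ^r on {1, …, D} by Ψ^r_d = 0 for d ≤ r, Ψ^r_d = r/(d(d−1)) for r+1 ≤ d ≤ D−1, and Ψ^r_D = r/(D−1). Then Ψ^r is a probability distribution on {1, …, D}, and for all nonnegative reals ħ_1, …, ħ_M: Ω(x; ħ, Ψ^r) + (r·∑_{i=r}^{M} ħ_i)·ln(1−x) ≥ 0 for all x ∈ [0, 1−η], and this inequality is strict for all x ∈ (0, 1−η] provided ħ_i > 0 for some 1 ≤ i ≤ M. Consequently, θ = r·∑_{i=r}^{M} ħ_i satisfies the constraint Ω(x; ħ, Ψ^r) + θ·ln(1−x) ≥ 0 for all x ∈ [0, 1−η]. -/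

import Mathlib

/-- The regularized incomplete beta function with positive integer parameters `a`, `b`. -/
noncomputable def incBeta (a b : ℕ) (x : ℝ) : ℝ :=
  ∑ j ∈ Finset.Icc a (a + b - 1),
    (Nat.choose (a + b - 1) j : ℝ) * x ^ j * (1 - x) ^ (a + b - 1 - j)

/-- `S_r(x; Ψ) = ∑_{d=r+1}^D d Ψ_d I_{d-r,r}(x) + ∑_{d=1}^{min(r,D)} d Ψ_d`. -/
noncomputable def Sfun (D r : ℕ) (Ψ : ℕ → ℝ) (x : ℝ) : ℝ :=
  (∑ d ∈ Finset.Icc (r + 1) D, (d : ℝ) * Ψ d * incBeta (d - r) r x) +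
    ∑ d ∈ Finset.Icc 1 (min r D), (d : ℝ) * Ψ d

/-- `Ω(x; ħ, Ψ) = ∑_{r=1}^M ħ_r S_r(x; Ψ)`. -/
noncomputable def OmegaFun (M D : ℕ) (hb Ψ : ℕ → ℝ) (x : ℝ) : ℝ :=
  ∑ r ∈ Finset.Icc 1 M, hb r * Sfun D r Ψ x

/-- The degree distribution `Ψ^r`: `Ψ^r_d = 0` for `d ≤ r`,
`Ψ^r_d = r/(d(d-1))` for `r+1 ≤ d ≤ D-1`, `Ψ^r_D = r/(D-1)`. -/
noncomputable def PsiR (r D : ℕ) : ℕ → ℝ := fun d =>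
  if d ≤ r then 0
  else if d < D then (r : ℝ) / ((d : ℝ) * ((d : ℝ) - 1))
  else if d = D then (r : ℝ) / ((D : ℝ) - 1)
  else 0

/-!
Write `p = 1 - x` and let `T(n, i)` be the probability of fewer than `i` successes in `n`
independent trials of success probability `p`. Then `I_{d-i,i}(x) = T(d-1, i)`, and the weights
`d Ψ^r_d` turn `S_i(x; Ψ^r)` into `r (∑_{m=r}^{D-1} T(m, i) / m + T(D-1, i))`.

Let `N` be the trial of the `i`-th success, so that `T(m, i) = P(N > m)`. The infinite series
`∑_{m ≥ 1} T(m, i) / m` equals `H_{i-1} - log p`, where `H` denotes the harmonic numbers: for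
`i = 1` it is the logarithmic series, and passing from `i` to `i + 1` adds
`∑_{m ≥ 1} P(i successes in m trials) / m = 1 / i`. Its terms with `m < i` are `1 / m`, hence
`-log p = ∑_{m ≥ i} T(m, i) / m`, and it remains to bound `∑_{m ≥ D} T(m, i) / m` by `T(D-1, i)`.
If `i` successes have not occurred after `D - 1` trials, then on average at most `i / p` further
trials are needed, that is, `∑_{m ≥ D-1} T(m, i) ≤ (i / p) T(D-1, i)`. This suffices when
`i ≤ (D + 1) p`.
-/

open Finset Polynomial

section BinomialTail

variable {R : Type*} [CommRing R]

/-- The probability of fewer than `i` successes in `n` independent trials of success probability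
`p`. The Bernstein polynomial of index `k` is the point probability of exactly `k` successes. -/
noncomputable def binomialTail (p : R) (n i : ℕ) : R :=
  ∑ k ∈ range i, (bernsteinPolynomial R n k).eval p

variable (R) in
lemma bernsteinPolynomial_succ_succ (n k : ℕ) :
    bernsteinPolynomial R (n + 1) (k + 1) =
      X * bernsteinPolynomial R n k + (1 - X) * bernsteinPolynomial R n (k + 1) := by
  rcases lt_or_ge k n with hkn | hnk
  · obtain ⟨m, rfl⟩ := Nat.exists_eq_add_of_lt hkn
    have hm : k + m + 1 - k = m + 1 := by omega
    have hm' : k + m + 1 - (k + 1) = m := by omega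
    simp only [bernsteinPolynomial, Nat.choose_succ_succ, Nat.add_sub_add_right, hm, hm',
      Nat.cast_add]
    ring
  · have hchoose : n.choose (k + 1) = 0 := Nat.choose_eq_zero_of_lt (Nat.lt_succ_of_le hnk)
    simp only [bernsteinPolynomial, Nat.choose_succ_succ', Nat.add_sub_add_right, hchoose,
      Nat.add_zero, Nat.cast_zero]
    ring

variable (R) in
lemma add_one_mul_bernsteinPolynomial (n k : ℕ) :
    ((n : R[X]) + 1) * (X * bernsteinPolynomial R n k) =
      ((k : R[X]) + 1) * bernsteinPolynomial R (n + 1) (k + 1) := by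
  have h : ((n : R[X]) + 1) * n.choose k = (n + 1).choose (k + 1) * (k + 1) := by
    exact_mod_cast congrArg (Nat.cast (R := R[X])) (Nat.add_one_mul_choose_eq n k)
  simp only [bernsteinPolynomial, Nat.add_sub_add_right]
  linear_combination X ^ (k + 1) * (1 - X) ^ (n - k) * h

lemma binomialTail_add_one_right (p : R) (n i : ℕ) :
    binomialTail p n (i + 1) = binomialTail p n i + (bernsteinPolynomial R n i).eval p :=
  sum_range_succ _ _

lemma binomialTail_one (p : R) (n : ℕ) : binomialTail p n 1 = (1 - p) ^ n := by
  simp [binomialTail, bernsteinPolynomial]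

lemma binomialTail_eq_one (p : R) {n i : ℕ} (h : n < i) : binomialTail p n i = 1 := by
  have hvanish : ∀ k ∈ range i, k ∉ range (n + 1) → bernsteinPolynomial R n k = 0 :=
    fun k _ hk ↦ bernsteinPolynomial.eq_zero_of_lt R (by simpa using hk)
  rw [binomialTail, ← eval_finsetSum, ← sum_subset (range_subset_range.2 h) hvanish,
    bernsteinPolynomial.sum, eval_one]

lemma binomialTail_sub_binomialTail_add_one (p : R) (n i : ℕ) :
    binomialTail p n (i + 1) - binomialTail p (n + 1) (i + 1) =
      p * (bernsteinPolynomial R n i).eval p := by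
  induction i with
  | zero =>
    simp only [zero_add, binomialTail_one, bernsteinPolynomial, Nat.choose_zero_right, Nat.cast_one,
      pow_zero, mul_one, Nat.sub_zero, one_mul, eval_pow, eval_sub, eval_one, eval_X]
    ring
  | succ i ih =>
    rw [binomialTail_add_one_right, binomialTail_add_one_right _ (n + 1),
      bernsteinPolynomial_succ_succ]
    simp only [eval_add, eval_mul, eval_sub, eval_X, eval_one]
    linear_combination ih

lemma sum_range_mul_bernsteinPolynomial (p : R) (m i : ℕ) :
    ∑ n ∈ range m, p * (bernsteinPolynomial R n i).eval p = 1 - binomialTail p m (i + 1) := by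
  simp_rw [← binomialTail_sub_binomialTail_add_one]
  rw [sum_range_sub', binomialTail_eq_one p i.succ_pos]

end BinomialTail

section Order

variable {R : Type*} [CommRing R] [PartialOrder R] {p : R}

lemma eval_bernsteinPolynomial_nonneg [IsOrderedRing R] (h0 : 0 ≤ p) (h1 : p ≤ 1) (n k : ℕ) :
    0 ≤ (bernsteinPolynomial R n k).eval p := by
  have := sub_nonneg.2 h1
  simp only [bernsteinPolynomial, eval_mul, eval_natCast, eval_pow, eval_X, eval_sub, eval_one]
  positivity

lemma binomialTail_nonneg [IsOrderedRing R] (h0 : 0 ≤ p) (h1 : p ≤ 1) (n i : ℕ) :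
    0 ≤ binomialTail p n i :=
  sum_nonneg fun k _ ↦ eval_bernsteinPolynomial_nonneg h0 h1 n k

lemma binomialTail_mono_right [IsOrderedRing R] (h0 : 0 ≤ p) (h1 : p ≤ 1) (n : ℕ) :
    Monotone (binomialTail p n) := fun _ _ hij ↦
  sum_le_sum_of_subset_of_nonneg (range_subset_range.2 hij)
    fun k _ _ ↦ eval_bernsteinPolynomial_nonneg h0 h1 n k

lemma binomialTail_pos [IsStrictOrderedRing R] (h0 : 0 ≤ p) (h1 : p < 1) (n : ℕ) {i : ℕ}
    (hi : 0 < i) : 0 < binomialTail p n i :=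
  calc
    0 < (1 - p) ^ n := pow_pos (sub_pos.2 h1) n
    _ = binomialTail p n 1 := (binomialTail_one p n).symm
    _ ≤ binomialTail p n i := binomialTail_mono_right h0 h1.le n hi

end Order

section Series

variable {𝕜 : Type*} [NormedField 𝕜]

lemma ne_zero_of_norm_one_sub_lt_one {p : 𝕜} (hp : ‖1 - p‖ < 1) : p ≠ 0 := by
  rintro rfl
  simp at hp

lemma hasSum_mul_bernsteinPolynomial {p : 𝕜} (hp : ‖1 - p‖ < 1) (i : ℕ) :
    HasSum (fun n ↦ p * (bernsteinPolynomial 𝕜 n i).eval p) 1 := by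
  have hvanish : ∑ n ∈ range i, p * (bernsteinPolynomial 𝕜 n i).eval p = 0 :=
    sum_eq_zero fun n hn ↦ by
      rw [bernsteinPolynomial.eq_zero_of_lt 𝕜 (mem_range.1 hn), eval_zero, mul_zero]
  rw [← hasSum_nat_add_iff' i, hvanish, sub_zero]
  convert! (hasSum_choose_mul_geometric_of_norm_lt_one i hp).mul_left (p ^ (i + 1)) using 1
  · funext n
    simp only [bernsteinPolynomial, Nat.add_sub_cancel, eval_mul, eval_natCast, eval_pow, eval_X,
      eval_sub, eval_one]
    ring
  · rw [sub_sub_cancel, mul_one_div_cancel (pow_ne_zero _ (ne_zero_of_norm_one_sub_lt_one hp))]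

lemma hasSum_mul_bernsteinPolynomial_add {p : 𝕜} (hp : ‖1 - p‖ < 1) (m i : ℕ) :
    HasSum (fun n ↦ p * (bernsteinPolynomial 𝕜 (n + m) i).eval p) (binomialTail p m (i + 1)) := by
  simpa [sum_range_mul_bernsteinPolynomial] using
    (hasSum_nat_add_iff' m).2 (hasSum_mul_bernsteinPolynomial hp i)

lemma hasSum_mul_binomialTail_add {p : 𝕜} (hp : ‖1 - p‖ < 1) (m i : ℕ) :
    HasSum (fun n ↦ p * binomialTail p (n + m) i) (∑ j ∈ range i, binomialTail p m (j + 1)) := by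
  simp only [binomialTail, mul_sum]
  exact hasSum_sum fun j _ ↦ hasSum_mul_bernsteinPolynomial_add hp m j

lemma summable_binomialTail_add {p : 𝕜} (hp : ‖1 - p‖ < 1) (m i : ℕ) :
    Summable fun n ↦ binomialTail p (n + m) i :=
  (summable_mul_left_iff (ne_zero_of_norm_one_sub_lt_one hp)).1
    (hasSum_mul_binomialTail_add hp m i).summable

lemma hasSum_bernsteinPolynomial_succ_div [CharZero 𝕜] {p : 𝕜} (hp : ‖1 - p‖ < 1) (i : ℕ) :
    HasSum (fun n : ℕ ↦ (bernsteinPolynomial 𝕜 (n + 1) (i + 1)).eval p / (n + 1))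
      (i + 1 : 𝕜)⁻¹ := by
  convert! (hasSum_mul_bernsteinPolynomial hp i).div_const (i + 1 : 𝕜) using 1
  · funext n
    have h := congrArg (eval p) (add_one_mul_bernsteinPolynomial 𝕜 n i)
    simp only [eval_mul, eval_add, eval_natCast, eval_one, eval_X] at h
    rw [div_eq_div_iff n.cast_add_one_ne_zero i.cast_add_one_ne_zero]
    linear_combination -h
  · rw [one_div]

lemma hasSum_binomialTail_succ_div {p : ℝ} (hp : ‖1 - p‖ < 1) (i : ℕ) :
    HasSum (fun n : ℕ ↦ binomialTail p (n + 1) (i + 1) / (n + 1)) (harmonic i - Real.log p) := by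
  induction i with
  | zero => simpa [binomialTail_one] using Real.hasSum_pow_div_log_of_abs_lt_one hp
  | succ i ih =>
    convert! ih.add (hasSum_bernsteinPolynomial_succ_div hp i) using 1
    · funext n
      rw [binomialTail_add_one_right, add_div]
    · rw [harmonic_succ]
      push_cast
      ring

lemma sum_Ico_binomialTail_div (p : ℝ) (i : ℕ) :
    ∑ m ∈ Ico 1 (i + 1), binomialTail p m (i + 1) / m = harmonic i := by
  rw [harmonic, range_eq_Ico, ← sum_Ico_add' (fun m : ℕ ↦ binomialTail p m (i + 1) / m) 0 i 1]
  push_cast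
  refine sum_congr rfl fun m hm ↦ ?_
  rw [binomialTail_eq_one p (by simpa using hm), one_div]

lemma hasSum_binomialTail_add_div {p : ℝ} (hp : ‖1 - p‖ < 1) {i N : ℕ} (hi : 0 < i) (hN : i ≤ N) :
    HasSum (fun n : ℕ ↦ binomialTail p (n + N) i / (n + N : ℕ))
      (-Real.log p - ∑ m ∈ Ico i N, binomialTail p m i / m) := by
  obtain ⟨j, rfl⟩ := Nat.exists_eq_add_one.2 hi
  obtain ⟨k, rfl⟩ := Nat.exists_eq_add_one.2 (hi.trans_le hN)
  convert! (hasSum_nat_add_iff' k).2 (hasSum_binomialTail_succ_div hp j) using 1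
  · funext n
    push_cast
    ring_nf
  · have hreindex := sum_Ico_add' (fun m : ℕ ↦ binomialTail p m (j + 1) / m) 0 k 1
    rw [zero_add, ← sum_Ico_consecutive _ hi hN, sum_Ico_binomialTail_div] at hreindex
    push_cast at hreindex
    rw [range_eq_Ico, hreindex]
    ring

end Series

section LogBound

variable {p : ℝ} {n i : ℕ}

lemma norm_one_sub_lt_one (h0 : 0 < p) (h1 : p ≤ 1) : ‖1 - p‖ < 1 := by
  rw [Real.norm_of_nonneg (sub_nonneg.2 h1)]
  linarith

lemma mul_tsum_binomialTail_add_le (h0 : 0 < p) (h1 : p ≤ 1) (n i : ℕ) :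
    p * ∑' m, binomialTail p (m + n) i ≤ i * binomialTail p n i := by
  rw [← tsum_mul_left, (hasSum_mul_binomialTail_add (norm_one_sub_lt_one h0 h1) n i).tsum_eq]
  calc
    ∑ j ∈ range i, binomialTail p n (j + 1) ≤ ∑ _j ∈ range i, binomialTail p n i :=
      sum_le_sum fun j hj ↦ binomialTail_mono_right h0.le h1 n (mem_range.1 hj)
    _ = i * binomialTail p n i := by simp

lemma tsum_binomialTail_add_succ_le (h0 : 0 < p) (h1 : p ≤ 1) (hip : (i : ℝ) ≤ (n + 2) * p) :
    ∑' m, binomialTail p (m + (n + 1)) i ≤ (n + 1) * binomialTail p n i := by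
  have hfirst := (summable_binomialTail_add (norm_one_sub_lt_one h0 h1) n i).tsum_eq_zero_add
  simp only [zero_add, add_right_comm _ 1 n, add_assoc] at hfirst
  have htotal := mul_tsum_binomialTail_add_le h0 h1 n i
  have hip' := mul_le_mul_of_nonneg_right hip (binomialTail_nonneg h0.le h1 n i)
  rw [hfirst] at htotal
  refine le_of_mul_le_mul_left ?_ h0
  linarith

lemma tsum_binomialTail_add_succ_div_lt (h0 : 0 < p) (h1 : p < 1) (hi : 0 < i)
    (hip : (i : ℝ) ≤ (n + 2) * p) (hin : i ≤ n + 1) :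
    ∑' m : ℕ, binomialTail p (m + (n + 1)) i / (m + (n + 1) : ℕ) < binomialTail p n i := by
  have hp := norm_one_sub_lt_one h0 h1.le
  have hn : (0 : ℝ) < n + 1 := n.cast_add_one_pos
  calc
    ∑' m : ℕ, binomialTail p (m + (n + 1)) i / (m + (n + 1) : ℕ)
      < ∑' m : ℕ, binomialTail p (m + (n + 1)) i / (n + 1) := by
        refine Summable.tsum_lt_tsum (i := 1) (fun m ↦ ?_) ?_
          (hasSum_binomialTail_add_div hp hi hin).summable
          ((summable_binomialTail_add hp _ i).div_const _)
        · refine div_le_div_of_nonneg_left (binomialTail_nonneg h0.le h1.le _ _) hn ?_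
          push_cast
          linarith [m.cast_nonneg (α := ℝ)]
        · -- The terms at `0` agree, so strictness is read off at `1`.
          refine div_lt_div_of_pos_left (binomialTail_pos h0.le h1 _ hi) hn ?_
          push_cast
          linarith
    _ ≤ binomialTail p n i := by
        rw [tsum_div_const, div_le_iff₀' hn]
        exact tsum_binomialTail_add_succ_le h0 h1.le hip

lemma neg_log_lt_sum_binomialTail_div_add (h0 : 0 < p) (h1 : p < 1) (hi : 0 < i)
    (hip : (i : ℝ) ≤ (n + 2) * p) (hin : i ≤ n + 1) :
    -Real.log p < ∑ m ∈ Ico i (n + 1), binomialTail p m i / m + binomialTail p n i := by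
  have hremainder := tsum_binomialTail_add_succ_div_lt h0 h1 hi hip hin
  rw [(hasSum_binomialTail_add_div (norm_one_sub_lt_one h0 h1.le) hi hin).tsum_eq] at hremainder
  linarith

end LogBound

lemma incBeta_eq_binomialTail {a : ℕ} (ha : 0 < a) (b : ℕ) (x : ℝ) :
    incBeta a b x = binomialTail (1 - x) (a + b - 1) b := by
  unfold incBeta binomialTail
  refine sum_nbij' (a + b - 1 - ·) (a + b - 1 - ·) (by grind) (by grind) (by grind) (by grind)
    fun j hj ↦ ?_
  have hj' : j ≤ a + b - 1 := (mem_Icc.1 hj).2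
  simp only [bernsteinPolynomial, eval_mul, eval_natCast, eval_pow, eval_X, eval_sub, eval_one,
    sub_sub_cancel, Nat.choose_symm hj', Nat.sub_sub_self hj']
  ring

lemma Sfun_eq_sum_binomialTail (D i : ℕ) (Ψ : ℕ → ℝ) (x : ℝ) :
    Sfun D i Ψ x = ∑ d ∈ Icc 1 D, d * Ψ d * binomialTail (1 - x) (d - 1) i := by
  have hlow : {d ∈ Icc 1 D | d ≤ i} = Icc 1 (min i D) := by
    ext d
    simp only [mem_filter, mem_Icc]
    omega
  have hhigh : {d ∈ Icc 1 D | ¬d ≤ i} = Icc (i + 1) D := by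
    ext d
    simp only [mem_filter, mem_Icc]
    omega
  rw [← sum_filter_not_add_sum_filter _ (· ≤ i), hlow, hhigh, Sfun]
  congr 1
  · refine sum_congr rfl fun d hd ↦ ?_
    have hid : i < d := (mem_Icc.1 hd).1
    rw [incBeta_eq_binomialTail (Nat.sub_pos_of_lt hid), Nat.sub_add_cancel hid.le]
  · refine sum_congr rfl fun d hd ↦ ?_
    have hdi : d - 1 < i := by
      simp only [mem_Icc] at hd
      omega
    rw [binomialTail_eq_one _ hdi, mul_one]

lemma Sfun_nonneg {D : ℕ} {Ψ : ℕ → ℝ} (hΨ : ∀ d ∈ Icc 1 D, 0 ≤ Ψ d) {x : ℝ} (h0 : 0 ≤ x)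
    (h1 : x ≤ 1) (i : ℕ) : 0 ≤ Sfun D i Ψ x := by
  rw [Sfun_eq_sum_binomialTail]
  exact sum_nonneg fun d hd ↦ mul_nonneg (mul_nonneg d.cast_nonneg (hΨ d hd))
    (binomialTail_nonneg (sub_nonneg.2 h1) (sub_le_self 1 h0) _ _)

lemma OmegaFun_add_mul_sum_mul {r : ℕ} (hr : 0 < r) (M D : ℕ) (hb Ψ : ℕ → ℝ) (x c l : ℝ) :
    OmegaFun M D hb Ψ x + (c * ∑ i ∈ Icc r M, hb i) * l =
      ∑ i ∈ Icc 1 M, hb i * (Sfun D i Ψ x + if r ≤ i then c * l else 0) := by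
  have hIcc : Icc r M = {i ∈ Icc 1 M | r ≤ i} := by
    ext i
    simp only [mem_filter, mem_Icc]
    omega
  rw [hIcc, OmegaFun, sum_filter, mul_sum, sum_mul, ← sum_add_distrib]
  refine sum_congr rfl fun i _ ↦ ?_
  split_ifs <;> ring

section PsiR

variable {r n : ℕ}

lemma PsiR_of_le {d : ℕ} (D : ℕ) (h : d ≤ r) : PsiR r D d = 0 := if_pos h

lemma PsiR_add_one_of_lt {m : ℕ} (hr : r ≤ m) (hm : m < n) :
    PsiR r (n + 1) (m + 1) = r / ((m + 1) * m) := by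
  simp [PsiR, hm, hr.not_gt]

lemma PsiR_add_one_self (h : r ≤ n) : PsiR r (n + 1) (n + 1) = r / n := by
  simp [PsiR, h.not_gt]

lemma PsiR_nonneg (r D d : ℕ) : 0 ≤ PsiR r D d := by
  have cast_sub_one_nonneg {m : ℕ} (hm : r < m) : (0 : ℝ) ≤ m - 1 :=
    sub_nonneg.2 (Nat.one_le_cast.2 (Nat.one_le_of_lt hm))
  unfold PsiR
  split_ifs with hdr hdD hdD'
  · rfl
  · have := cast_sub_one_nonneg (not_le.1 hdr)
    positivity
  · have := cast_sub_one_nonneg (hdD' ▸ not_le.1 hdr)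
    positivity
  · rfl

lemma sum_mul_PsiR_mul (hr : 0 < r) (hrn : r ≤ n) (f : ℕ → ℝ) :
    ∑ d ∈ Icc 1 (n + 1), d * PsiR r (n + 1) d * f d =
      r * (∑ m ∈ Ico r (n + 1), f (m + 1) / m + f (n + 1)) := by
  have hn : (0 : ℝ) < n := by exact_mod_cast hr.trans_le hrn
  have hsupport : ∑ d ∈ Icc 1 n, d * PsiR r (n + 1) d * f d =
      ∑ d ∈ Ico (r + 1) (n + 1), d * PsiR r (n + 1) d * f d := by
    refine (sum_subset (fun d ↦ ?_) fun d _ hd ↦ ?_).symm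
    · simp only [mem_Ico, mem_Icc]
      omega
    · rw [PsiR_of_le, mul_zero, zero_mul]
      simp only [mem_Ico, mem_Icc] at *
      omega
  have hinterior : ∀ m ∈ Ico r n,
      ((m + 1 : ℕ) : ℝ) * PsiR r (n + 1) (m + 1) * f (m + 1) = r * (f (m + 1) / m) := by
    intro m hm
    obtain ⟨hrm, hmn⟩ := mem_Ico.1 hm
    rw [PsiR_add_one_of_lt hrm hmn]
    have hm0 : (0 : ℝ) < m := by exact_mod_cast hr.trans_le hrm
    push_cast
    field_simp
  rw [sum_Icc_succ_top (by omega), hsupport, ← sum_Ico_add', sum_congr rfl hinterior, ← mul_sum,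
    sum_Ico_succ_top hrn, PsiR_add_one_self hrn]
  push_cast
  field_simp
  ring

lemma sum_Ico_inv_add_one_div (hr : 0 < r) (hrn : r ≤ n) :
    ∑ m ∈ Ico r n, ((m + 1 : ℕ) : ℝ)⁻¹ / m = (r : ℝ)⁻¹ - (n : ℝ)⁻¹ := by
  have htelescope := sum_Ico_sub (fun m : ℕ ↦ -(m : ℝ)⁻¹) hrn
  rw [neg_sub_neg] at htelescope
  rw [← htelescope]
  refine sum_congr rfl fun m hm ↦ ?_
  have hm0 : (0 : ℝ) < m := by exact_mod_cast hr.trans_le (mem_Ico.1 hm).1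
  push_cast
  field_simp
  ring

lemma sum_PsiR (hr : 0 < r) (hrn : r ≤ n) : ∑ d ∈ Icc 1 (n + 1), PsiR r (n + 1) d = 1 := by
  calc
    ∑ d ∈ Icc 1 (n + 1), PsiR r (n + 1) d
      = ∑ d ∈ Icc 1 (n + 1), d * PsiR r (n + 1) d * (d : ℝ)⁻¹ := by
        refine sum_congr rfl fun d hd ↦ ?_
        have hd0 : (d : ℝ) ≠ 0 := Nat.cast_ne_zero.2 (Nat.one_le_iff_ne_zero.1 (mem_Icc.1 hd).1)
        field_simp
    _ = r * (r : ℝ)⁻¹ := by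
        rw [sum_mul_PsiR_mul hr hrn, sum_Ico_inv_add_one_div hr (by omega), sub_add_cancel]
    _ = 1 := mul_inv_cancel₀ (by exact_mod_cast hr.ne')

variable {M i : ℕ} {x : ℝ}

lemma Sfun_PsiR (hr : 0 < r) (hrn : r ≤ n) (i : ℕ) (x : ℝ) :
    Sfun (n + 1) i (PsiR r (n + 1)) x =
      r * (∑ m ∈ Ico r (n + 1), binomialTail (1 - x) m i / m + binomialTail (1 - x) n i) := by
  rw [Sfun_eq_sum_binomialTail, sum_mul_PsiR_mul hr hrn]
  simp only [Nat.add_sub_cancel]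

lemma Sfun_PsiR_pos (hr : 0 < r) (hrn : r ≤ n) (hi : 0 < i) (h0 : 0 < x) (h1 : x ≤ 1) :
    0 < Sfun (n + 1) i (PsiR r (n + 1)) x := by
  have hpos (m : ℕ) : 0 < binomialTail (1 - x) m i :=
    binomialTail_pos (sub_nonneg.2 h1) (sub_lt_self 1 h0) m hi
  rw [Sfun_PsiR hr hrn]
  refine mul_pos (Nat.cast_pos.2 hr) (add_pos_of_nonneg_of_pos (sum_nonneg fun m _ ↦ ?_) (hpos n))
  exact div_nonneg (hpos m).le m.cast_nonneg

lemma Sfun_PsiR_add_mul_log_pos (hr : 0 < r) (hri : r ≤ i) (hin : i ≤ n) (h0 : 0 < x) (h1 : x < 1)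
    (hix : (i : ℝ) ≤ (n + 2) * (1 - x)) :
    0 < Sfun (n + 1) i (PsiR r (n + 1)) x + r * Real.log (1 - x) := by
  have hp0 : 0 < 1 - x := sub_pos.2 h1
  have hp1 : 1 - x < 1 := sub_lt_self 1 h0
  have hlog := neg_log_lt_sum_binomialTail_div_add hp0 hp1 (hr.trans_le hri) hix (by omega)
  have hsum : ∑ m ∈ Ico i (n + 1), binomialTail (1 - x) m i / m ≤
      ∑ m ∈ Ico r (n + 1), binomialTail (1 - x) m i / m :=
    sum_le_sum_of_subset_of_nonneg (Ico_subset_Ico_left hri) fun m _ _ ↦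
      div_nonneg (binomialTail_nonneg hp0.le hp1.le m i) m.cast_nonneg
  rw [Sfun_PsiR hr (hri.trans hin), ← mul_add]
  exact mul_pos (Nat.cast_pos.2 hr) (by linarith)

lemma Sfun_PsiR_add_ite_mul_log_pos (hr : 0 < r) (hrn : r ≤ n) (hi : i ∈ Icc 1 M) (hMn : M ≤ n)
    (h0 : 0 < x) (h1 : x < 1) (hMx : (M : ℝ) ≤ (n + 2) * (1 - x)) :
    0 < Sfun (n + 1) i (PsiR r (n + 1)) x + if r ≤ i then r * Real.log (1 - x) else 0 := by
  obtain ⟨hi1, hiM⟩ := mem_Icc.1 hi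
  split_ifs with hri
  · exact Sfun_PsiR_add_mul_log_pos hr hri (hiM.trans hMn) h0 h1 ((Nat.cast_le.2 hiM).trans hMx)
  · simpa using Sfun_PsiR_pos hr hrn hi1 h0 h1.le

lemma OmegaFun_PsiR_add_mul_log_nonneg (hr : 0 < r) (hrn : r ≤ n) (hMn : M ≤ n) {hb : ℕ → ℝ}
    (hb0 : ∀ i ∈ Icc 1 M, 0 ≤ hb i) (h0 : 0 ≤ x) (h1 : x < 1)
    (hMx : (M : ℝ) ≤ (n + 2) * (1 - x)) :
    0 ≤ OmegaFun M (n + 1) hb (PsiR r (n + 1)) x +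
      (r * ∑ i ∈ Icc r M, hb i) * Real.log (1 - x) := by
  rw [OmegaFun_add_mul_sum_mul hr]
  refine sum_nonneg fun i hi ↦ mul_nonneg (hb0 i hi) ?_
  rcases h0.eq_or_lt with rfl | h0
  · simpa using Sfun_nonneg (fun d _ ↦ PsiR_nonneg r (n + 1) d) le_rfl zero_le_one i
  · exact (Sfun_PsiR_add_ite_mul_log_pos hr hrn hi hMn h0 h1 hMx).le

lemma OmegaFun_PsiR_add_mul_log_pos (hr : 0 < r) (hrn : r ≤ n) (hMn : M ≤ n) {hb : ℕ → ℝ}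
    (hb0 : ∀ i ∈ Icc 1 M, 0 ≤ hb i) (hb_pos : ∃ i ∈ Icc 1 M, 0 < hb i) (h0 : 0 < x) (h1 : x < 1)
    (hMx : (M : ℝ) ≤ (n + 2) * (1 - x)) :
    0 < OmegaFun M (n + 1) hb (PsiR r (n + 1)) x +
      (r * ∑ i ∈ Icc r M, hb i) * Real.log (1 - x) := by
  have hpos {i : ℕ} (hi : i ∈ Icc 1 M) :=
    Sfun_PsiR_add_ite_mul_log_pos hr hrn hi hMn h0 h1 hMx
  obtain ⟨i, hi, hbi⟩ := hb_pos
  rw [OmegaFun_add_mul_sum_mul hr]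
  exact sum_pos' (fun j hj ↦ mul_nonneg (hb0 j hj) (hpos hj).le) ⟨i, hi, mul_pos hbi (hpos hi)⟩

end PsiR

theorem PsiR_achieves_rate (M : ℕ) (hM : 1 ≤ M) (η : ℝ) (hη0 : 0 < η) (hη1 : η < 1)
    (r D : ℕ) (hr1 : 1 ≤ r) (hrM : r ≤ M) (hD : M + 1 ≤ D)
    (hDη : (M : ℝ) ≤ ((D : ℝ) + 1) * η) :
    (∀ d ∈ Finset.Icc 1 D, 0 ≤ PsiR r D d) ∧
    (∑ d ∈ Finset.Icc 1 D, PsiR r D d = 1) ∧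
    (∀ hb : ℕ → ℝ, (∀ i ∈ Finset.Icc 1 M, 0 ≤ hb i) →
      (∀ x ∈ Set.Icc (0:ℝ) (1 - η),
        OmegaFun M D hb (PsiR r D) x +
          ((r : ℝ) * ∑ i ∈ Finset.Icc r M, hb i) * Real.log (1 - x) ≥ 0) ∧
      ((∃ i ∈ Finset.Icc 1 M, 0 < hb i) →
        ∀ x : ℝ, 0 < x → x ≤ 1 - η →
          OmegaFun M D hb (PsiR r D) x +
            ((r : ℝ) * ∑ i ∈ Finset.Icc r M, hb i) * Real.log (1 - x) > 0)) := by
  obtain ⟨n, rfl⟩ : ∃ n, D = n + 1 := Nat.exists_eq_add_one.2 (by omega)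
  have hMn : M ≤ n := Nat.le_of_lt_succ hD
  have hrn : r ≤ n := hrM.trans hMn
  have hMx {x : ℝ} (hxη : x ≤ 1 - η) : (M : ℝ) ≤ (n + 2) * (1 - x) :=
    calc
      (M : ℝ) ≤ (n + 2) * η := by convert! hDη using 2; push_cast; ring
      _ ≤ (n + 2) * (1 - x) := by gcongr; linarith
  refine ⟨fun d _ ↦ PsiR_nonneg r _ d, sum_PsiR hr1 hrn, fun hb hb0 ↦ ⟨?_, ?_⟩⟩
  · rintro x ⟨hx0, hxη⟩
    exact OmegaFun_PsiR_add_mul_log_nonneg hr1 hrn hMn hb0 hx0 (by linarith) (hMx hxη)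
  · intro hb_pos x hx0 hxη
    exact OmegaFun_PsiR_add_mul_log_pos hr1 hrn hMn hb0 hb_pos hx0 (by linarith) (hMx hxη)
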